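/- arXiv:2509.22332 — 8 statements merged into one kernel-verified Lean document; each statement's English description precedes it below -/
import Mathlib

section
/- Let G be a finite simple graph and let S be any set of vertices of G. Then the set S' := S \ N(S) is an independent set and, computing cardinalities as integers, |S'| − |N(S')| ≥ |S| − |N(S)|. -/
open Finset

/-- For any set `S` of vertices of a finite simple graph `G`, the set
`S' := S \ N(S)` is independent and `|S'| − |N(S')| ≥ |S| − |N(S)|` as integers. -/
theorem stmt1 {V : Type*} [Fintype V] [DecidableEq V]
    (G : SimpleGraph V) [DecidableRel G.Adj] (S : Finset V) :
    let N : Finset V → Finset V := fun T => T.biUnion (fun s => G.neighborFinset s)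
    let S' := S \ N S
    (∀ u ∈ S', ∀ v ∈ S', ¬ G.Adj u v) ∧
      (S.card : ℤ) - ((N S).card : ℤ) ≤ (S'.card : ℤ) - ((N S').card : ℤ) := by
  intro N S'
  have mem_N : ∀ T v, v ∈ N T ↔ ∃ s ∈ T, G.Adj s v := fun T v => by simp [N]
  have not_adj : ∀ u ∈ S, ∀ v ∈ S', ¬ G.Adj u v := fun u hu v hv h =>
    (mem_sdiff.1 hv).2 ((mem_N S v).2 ⟨u, hu, h⟩)
  refine ⟨fun u hu => not_adj u (mem_sdiff.1 hu).1, ?_⟩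
  have disj : Disjoint (S ∩ N S) (N S') := by
    refine disjoint_left.2 fun x hx hx' => ?_
    obtain ⟨s, hs, h⟩ := (mem_N S' x).1 hx'
    exact not_adj x (mem_inter.1 hx).1 s hs h.symm
  have sub : (S ∩ N S) ∪ N S' ⊆ N S :=
    union_subset inter_subset_right (biUnion_subset_biUnion_of_subset_left _ sdiff_subset)
  have card_le := card_le_card sub
  rw [card_union_of_disjoint disj] at card_le
  have card_split : S'.card + (S ∩ N S).card = S.card := card_sdiff_add_card_inter S (N S)
  omega
end

section
/- Let G be a finite simple graph. Then the maximum of |S| − |N(S)| (as an integer) taken over all subsets S of V(G) equals the maximum of |S| − |N(S)| taken over all independent subsets S of V(G); both maxima range over all subsets including the empty set. -/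
open Finset

/-- Deleting from `S` the vertices that have a neighbor in `S` does not decrease
`|S| − |N(S)|`. -/
theorem card_sub_card_neighbors_le_sdiff {V : Type*} [Fintype V] [DecidableEq V]
    (G : SimpleGraph V) [DecidableRel G.Adj] (S : Finset V) :
    (S.card : ℤ) - ((S.biUnion (fun s => G.neighborFinset s)).card : ℤ) ≤
      ((S \ S.biUnion (fun s => G.neighborFinset s)).card : ℤ) -
        (((S \ S.biUnion (fun s => G.neighborFinset s)).biUnion
          (fun s => G.neighborFinset s)).card : ℤ) := by
  set N := S.biUnion (fun s => G.neighborFinset s) with hN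
  have hsub : (S \ N).biUnion (fun s => G.neighborFinset s) ⊆ N \ S := by
    intro v hv
    simp only [hN, mem_biUnion, mem_sdiff, SimpleGraph.mem_neighborFinset] at hv ⊢
    obtain ⟨u, ⟨huS, huN⟩, huv⟩ := hv
    exact ⟨⟨u, huS, huv⟩, fun hvS => huN ⟨v, hvS, huv.symm⟩⟩
  have hcard := card_le_card hsub
  have hS := card_sdiff_add_card_inter S N
  have hNS := card_sdiff_add_card_inter N S
  rw [inter_comm] at hNS
  omega

/-- The maximum of `|S| − |N(S)|` (as an integer) over all subsets `S` of the
vertex set equals the maximum over all independent subsets `S` (both ranges include `∅`). -/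
theorem stmt2 {V : Type*} [Fintype V] [DecidableEq V]
    (G : SimpleGraph V) [DecidableRel G.Adj] :
    (Finset.univ : Finset V).powerset.sup'
        ⟨∅, by simp⟩
        (fun T => (T.card : ℤ) - ((T.biUnion (fun s => G.neighborFinset s)).card : ℤ)) =
      ((Finset.univ : Finset V).powerset.filter
          (fun T => ∀ u ∈ T, ∀ v ∈ T, ¬ G.Adj u v)).sup'
        ⟨∅, by simp⟩
        (fun T => (T.card : ℤ) - ((T.biUnion (fun s => G.neighborFinset s)).card : ℤ)) := by
  apply le_antisymm
  · refine sup'_le _ _ fun S _ => (card_sub_card_neighbors_le_sdiff G S).trans ?_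
    refine le_sup' (fun T : Finset V =>
      (T.card : ℤ) - ((T.biUnion (fun s => G.neighborFinset s)).card : ℤ)) ?_
    simp only [mem_filter, mem_powerset, subset_univ, true_and, mem_sdiff, mem_biUnion,
      SimpleGraph.mem_neighborFinset]
    exact fun u hu v hv huv => hv.2 ⟨u, hu.1, huv⟩
  · exact sup'_mono _ (filter_subset _ _) _
end

section
/- Let P be a finite simple graph and let S be an independent set of non-isolated vertices of P such that |S| − |N(S)| ≥ |S'| − |N(S')| (as integers) for every independent set S' of non-isolated vertices of P. Then for every subset X ⊆ N(S), we have |X| ≤ |N(X) ∩ S|. -/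
open Finset

/-- If `S` is an independent set of non-isolated vertices maximizing
`|S| − |N(S)|` among all such sets, then every `X ⊆ N(S)` satisfies `|X| ≤ |N(X) ∩ S|`. -/
theorem stmt3 {V : Type*} [Fintype V] [DecidableEq V]
    (P : SimpleGraph V) [DecidableRel P.Adj] (S : Finset V)
    (hInd : ∀ u ∈ S, ∀ v ∈ S, ¬ P.Adj u v)
    (hNonIso : ∀ v ∈ S, ∃ w, P.Adj v w)
    (hMax : ∀ S' : Finset V, (∀ u ∈ S', ∀ v ∈ S', ¬ P.Adj u v) →
      (∀ v ∈ S', ∃ w, P.Adj v w) →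
      (S'.card : ℤ) - ((S'.biUnion (fun s => P.neighborFinset s)).card : ℤ) ≤
        (S.card : ℤ) - ((S.biUnion (fun s => P.neighborFinset s)).card : ℤ))
    (X : Finset V) (hX : X ⊆ S.biUnion (fun s => P.neighborFinset s)) :
    X.card ≤ ((X.biUnion (fun s => P.neighborFinset s)) ∩ S).card := by
  -- Compare `S` with `S \ N(X)`, whose neighborhood lies in `N(S) \ X`.
  set N : Finset V → Finset V := fun T => T.biUnion (fun s => P.neighborFinset s) with hN
  have hsub : N (S \ N X) ⊆ N S \ X := by
    intro w hw
    simp only [hN, mem_biUnion, mem_sdiff, SimpleGraph.mem_neighborFinset] at hw ⊢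
    obtain ⟨s, ⟨hs, hsX⟩, hsw⟩ := hw
    exact ⟨⟨s, hs, hsw⟩, fun hwX => hsX ⟨w, hwX, hsw.symm⟩⟩
  have hmax := hMax (S \ N X)
    (fun u hu v hv => hInd u (mem_sdiff.1 hu).1 v (mem_sdiff.1 hv).1)
    (fun v hv => hNonIso v (mem_sdiff.1 hv).1)
  have hcard : (N (S \ N X)).card ≤ (N S \ X).card := card_le_card hsub
  have hNS : (N S \ X).card + X.card = (N S).card := card_sdiff_add_card_eq_card hX
  have hS : (S \ N X).card + (S ∩ N X).card = S.card := card_sdiff_add_card_inter S (N X)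
  change ((S \ N X).card : ℤ) - ((N (S \ N X)).card : ℤ) ≤ (S.card : ℤ) - ((N S).card : ℤ) at hmax
  change X.card ≤ (N X ∩ S).card
  rw [inter_comm]
  omega
end

section
/- Let P be a finite simple graph and let S be an independent set of non-isolated vertices of P such that |S| − |N(S)| ≥ |S'| − |N(S')| (as integers) for every independent set S' of non-isolated vertices of P. Then there exists an injective function f : N(S) → S such that every vertex v ∈ N(S) is adjacent to f(v); in other words, there is a matching in P, using only edges between N(S) and S, that covers all vertices of N(S). -/
open Finset

/-- If `S` is an independent set of non-isolated vertices maximizing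
`|S| − |N(S)|` among all such sets, then there is a matching of `N(S)` into `S`:
an injective map `f : N(S) → S` with every `v ∈ N(S)` adjacent to `f v`. -/
theorem stmt4 {V : Type*} [Fintype V] [DecidableEq V]
    (P : SimpleGraph V) [DecidableRel P.Adj] (S : Finset V)
    (hInd : ∀ u ∈ S, ∀ v ∈ S, ¬ P.Adj u v)
    (hNonIso : ∀ v ∈ S, ∃ w, P.Adj v w)
    (hMax : ∀ S' : Finset V, (∀ u ∈ S', ∀ v ∈ S', ¬ P.Adj u v) →
      (∀ v ∈ S', ∃ w, P.Adj v w) →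
      (S'.card : ℤ) - ((S'.biUnion (fun s => P.neighborFinset s)).card : ℤ) ≤
        (S.card : ℤ) - ((S.biUnion (fun s => P.neighborFinset s)).card : ℤ)) :
    ∃ f : V → V,
      (∀ v ∈ S.biUnion (fun s => P.neighborFinset s), f v ∈ S ∧ P.Adj v (f v)) ∧
      (∀ u ∈ S.biUnion (fun s => P.neighborFinset s),
        ∀ v ∈ S.biUnion (fun s => P.neighborFinset s), f u = f v → u = v) := by
  set N := S.biUnion (fun s => P.neighborFinset s)
  have hHall : ∀ T : Finset {v // v ∈ N},
      #T ≤ #(T.biUnion fun v => S.filter (P.Adj v)) := by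
    intro T
    set A := T.biUnion fun v => S.filter (P.Adj v)
    have hAS : A ⊆ S := biUnion_subset.2 fun v _ => filter_subset _ _
    have hTN : T.map (.subtype _) ⊆ N := fun v hv => by
      obtain ⟨w, -, rfl⟩ := mem_map.1 hv
      exact w.2
    -- Deleting from `S` the neighbours of `T` removes all of `T` from the neighbourhood.
    have hsub : (S \ A).biUnion (fun s => P.neighborFinset s) ⊆ N \ T.map (.subtype _) := by
      intro w hw
      obtain ⟨s, hs, hsw⟩ := mem_biUnion.1 hw
      obtain ⟨hsS, hsA⟩ := mem_sdiff.1 hs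
      refine mem_sdiff.2 ⟨mem_biUnion.2 ⟨s, hsS, hsw⟩, fun hwT => hsA ?_⟩
      obtain ⟨t, ht, rfl⟩ := mem_map.1 hwT
      exact mem_biUnion.2
        ⟨t, ht, mem_filter.2 ⟨hsS, ((P.mem_neighborFinset _ _).1 hsw).symm⟩⟩
    have hmax := hMax (S \ A)
      (fun u hu v hv => hInd u (mem_sdiff.1 hu).1 v (mem_sdiff.1 hv).1)
      (fun v hv => hNonIso v (mem_sdiff.1 hv).1)
    have hcard := card_le_card hsub
    have hcardN := card_sdiff_add_card_eq_card hTN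
    have hcardS := card_sdiff_add_card_eq_card hAS
    rw [card_map] at hcardN
    omega
  obtain ⟨g, hg, hgt⟩ := (all_card_le_biUnion_card_iff_exists_injective _).1 hHall
  refine ⟨fun v => if h : v ∈ N then g ⟨v, h⟩ else v, fun v hv => ?_, fun u hu v hv huv => ?_⟩
  · simpa [hv] using mem_filter.1 (hgt ⟨v, hv⟩)
  · simp only [hu, hv, dite_true] at huv
    exact congrArg Subtype.val (hg huv)
end

section
/- Let P be a finite simple graph and let S be an independent set of non-isolated vertices of P such that |S| − |N(S)| ≥ |S'| − |N(S')| (as integers) for every independent set S' of non-isolated vertices of P. Let R = V(P) \ N[S] and assume that every vertex of R has at least one neighbor in R. Then for every subset X ⊆ R, the number of vertices v ∈ R \ X that have no neighbor in R \ X is at most |X|. -/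
open Finset

/-- With `S` an independent set of non-isolated vertices maximizing
`|S| − |N(S)|`, and `R = V(P) \ N[S]` such that every vertex of `R` has a neighbor
in `R`, for every `X ⊆ R` the number of vertices of `R \ X` with no neighbor in
`R \ X` is at most `|X|`. -/
theorem stmt5 {V : Type*} [Fintype V] [DecidableEq V]
    (P : SimpleGraph V) [DecidableRel P.Adj] (S : Finset V)
    (hInd : ∀ u ∈ S, ∀ v ∈ S, ¬ P.Adj u v)
    (hNonIso : ∀ v ∈ S, ∃ w, P.Adj v w)
    (hMax : ∀ S' : Finset V, (∀ u ∈ S', ∀ v ∈ S', ¬ P.Adj u v) →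
      (∀ v ∈ S', ∃ w, P.Adj v w) →
      (S'.card : ℤ) - ((S'.biUnion (fun s => P.neighborFinset s)).card : ℤ) ≤
        (S.card : ℤ) - ((S.biUnion (fun s => P.neighborFinset s)).card : ℤ))
    (R : Finset V)
    (hR : R = Finset.univ \ (S ∪ S.biUnion (fun s => P.neighborFinset s)))
    (hRnoIso : ∀ v ∈ R, ∃ w ∈ R, P.Adj v w)
    (X : Finset V) (hX : X ⊆ R) :
    ((R \ X).filter (fun v => ∀ w ∈ R \ X, ¬ P.Adj v w)).card ≤ X.card := by
  set I := (R \ X).filter (fun v => ∀ w ∈ R \ X, ¬ P.Adj v w) with hI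
  have memI : ∀ v, v ∈ I ↔ (v ∈ R ∧ v ∉ X) ∧ ∀ w, w ∈ R → w ∉ X → ¬ P.Adj v w := by
    intro v
    simp [hI]
  have memR : ∀ v, v ∈ R ↔ v ∉ S ∧ ∀ s ∈ S, ¬ P.Adj s v := by
    intro v
    simp [hR]
  have hDisj : Disjoint S I := by
    rw [Finset.disjoint_left]
    intro v hvS hvI
    exact ((memR v).1 ((memI v).1 hvI).1.1).1 hvS
  have hN : (S ∪ I).biUnion (fun s => P.neighborFinset s) ⊆
      S.biUnion (fun s => P.neighborFinset s) ∪ X := by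
    intro w hw
    simp only [Finset.mem_biUnion, Finset.mem_union, SimpleGraph.mem_neighborFinset] at hw ⊢
    obtain ⟨v, hv | hv, hvw⟩ := hw
    · exact Or.inl ⟨v, hv, hvw⟩
    · by_contra! hcon
      obtain ⟨⟨hvR, -⟩, hvIso⟩ := (memI v).1 hv
      have hwS : w ∉ S := fun hwS => ((memR v).1 hvR).2 w hwS hvw.symm
      exact hvIso w ((memR w).2 ⟨hwS, hcon.1⟩) hcon.2 hvw
  have hle := hMax (S ∪ I)
    (by
      intro u hu v hv huv
      rcases Finset.mem_union.1 hu with hu | hu <;> rcases Finset.mem_union.1 hv with hv | hv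
      · exact hInd u hu v hv huv
      · exact ((memR v).1 ((memI v).1 hv).1.1).2 u hu huv
      · exact ((memR u).1 ((memI u).1 hu).1.1).2 v hv huv.symm
      · exact ((memI u).1 hu).2 v ((memI v).1 hv).1.1 ((memI v).1 hv).1.2 huv)
    (by
      intro v hv
      rcases Finset.mem_union.1 hv with hv | hv
      · exact hNonIso v hv
      · obtain ⟨w, -, hw⟩ := hRnoIso v ((memI v).1 hv).1.1
        exact ⟨w, hw⟩)
  have hcardN := (Finset.card_le_card hN).trans (Finset.card_union_le _ _)
  rw [Finset.card_union_of_disjoint hDisj] at hle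
  omega
end

section
/- Let P be a finite simple graph and let S be an independent set of non-isolated vertices of P such that (i) |S| − |N(S)| ≥ |S'| − |N(S')| (as integers) for every independent set S' of non-isolated vertices of P, and (ii) |S| ≥ |S'| for every independent set S' of non-isolated vertices achieving |S'| − |N(S')| = |S| − |N(S)|. Let R = V(P) \ N[S] and assume that every vertex of R has at least one neighbor in R. Then for every vertex v ∈ R and every subset X ⊆ R \ {v}, the number of vertices u ∈ R \ ({v} ∪ X) that have no neighbor in R \ ({v} ∪ X) is at most |X|. -/
open Finset

/-- With `S` an independent set of non-isolated vertices maximizing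
`|S| − |N(S)|`, and of maximum cardinality among such maximizers, let
`R = V(P) \ N[S]` and assume every vertex of `R` has a neighbor in `R`. Then for every
`v ∈ R` and every `X ⊆ R \ {v}`, the number of vertices of `R \ ({v} ∪ X)` having no
neighbor in `R \ ({v} ∪ X)` is at most `|X|`. -/
theorem stmt6 {V : Type*} [Fintype V] [DecidableEq V]
    (P : SimpleGraph V) [DecidableRel P.Adj] (S : Finset V)
    (hInd : ∀ u ∈ S, ∀ v ∈ S, ¬ P.Adj u v)
    (hNonIso : ∀ v ∈ S, ∃ w, P.Adj v w)
    (hMax : ∀ S' : Finset V, (∀ u ∈ S', ∀ v ∈ S', ¬ P.Adj u v) →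
      (∀ v ∈ S', ∃ w, P.Adj v w) →
      (S'.card : ℤ) - ((S'.biUnion (fun s => P.neighborFinset s)).card : ℤ) ≤
        (S.card : ℤ) - ((S.biUnion (fun s => P.neighborFinset s)).card : ℤ))
    (hMaxCard : ∀ S' : Finset V, (∀ u ∈ S', ∀ v ∈ S', ¬ P.Adj u v) →
      (∀ v ∈ S', ∃ w, P.Adj v w) →
      (S'.card : ℤ) - ((S'.biUnion (fun s => P.neighborFinset s)).card : ℤ) =
        (S.card : ℤ) - ((S.biUnion (fun s => P.neighborFinset s)).card : ℤ) →
      S'.card ≤ S.card)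
    (R : Finset V)
    (hR : R = Finset.univ \ (S ∪ S.biUnion (fun s => P.neighborFinset s)))
    (hRnoIso : ∀ v ∈ R, ∃ w ∈ R, P.Adj v w)
    (v : V) (hv : v ∈ R) (X : Finset V) (hX : X ⊆ R \ {v}) :
    ((R \ (insert v X)).filter
        (fun u => ∀ w ∈ R \ (insert v X), ¬ P.Adj u w)).card ≤ X.card := by
  set N : Finset V → Finset V := fun T => T.biUnion (fun s => P.neighborFinset s) with hN
  set I := (R \ (insert v X)).filter (fun u => ∀ w ∈ R \ (insert v X), ¬ P.Adj u w) with hI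
  have mem_N : ∀ T x, x ∈ N T ↔ ∃ s ∈ T, P.Adj s x := by
    intro T x
    simp [hN]
  have mem_R : ∀ x, x ∈ R ↔ x ∉ S ∧ ∀ s ∈ S, ¬ P.Adj s x := by
    intro x
    simp [hR]
  have mem_I : ∀ u, u ∈ I ↔ u ∈ R \ insert v X ∧ ∀ w ∈ R \ insert v X, ¬ P.Adj u w := by
    intro u
    simp only [hI, mem_filter]
  have I_sub_R : ∀ u ∈ I, u ∈ R := fun u hu => (mem_sdiff.1 ((mem_I u).1 hu).1).1
  by_contra! hlt
  have hdisj : Disjoint S I :=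
    Finset.disjoint_left.2 fun x hxS hxI => ((mem_R x).1 (I_sub_R x hxI)).1 hxS
  have hcard : (S ∪ I).card = S.card + I.card := card_union_of_disjoint hdisj
  have hInd' : ∀ a ∈ S ∪ I, ∀ b ∈ S ∪ I, ¬ P.Adj a b := by
    intro a ha b hb hab
    rcases mem_union.1 ha with ha | ha <;> rcases mem_union.1 hb with hb | hb
    · exact hInd a ha b hb hab
    · exact ((mem_R b).1 (I_sub_R b hb)).2 a ha hab
    · exact ((mem_R a).1 (I_sub_R a ha)).2 b hb hab.symm
    · exact ((mem_I a).1 ha).2 b ((mem_I b).1 hb).1 hab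
  have hNonIso' : ∀ a ∈ S ∪ I, ∃ w, P.Adj a w := by
    intro a ha
    rcases mem_union.1 ha with ha | ha
    · exact hNonIso a ha
    · obtain ⟨w, -, hw⟩ := hRnoIso a (I_sub_R a ha)
      exact ⟨w, hw⟩
  have hsub : N (S ∪ I) ⊆ N S ∪ insert v X := by
    intro x hx
    obtain ⟨s, hs, hsx⟩ := (mem_N _ x).1 hx
    by_contra hcon
    rw [mem_union, not_or] at hcon
    have hxN : ∀ t ∈ S, ¬ P.Adj t x := fun t ht htx => hcon.1 ((mem_N S x).2 ⟨t, ht, htx⟩)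
    rcases mem_union.1 hs with hs | hs
    · exact hxN s hs hsx
    · have hxS : x ∉ S := fun hxS => ((mem_R s).1 (I_sub_R s hs)).2 x hxS hsx.symm
      exact ((mem_I s).1 hs).2 x (mem_sdiff.2 ⟨(mem_R x).2 ⟨hxS, hxN⟩, hcon.2⟩) hsx
  have hNcard : (N (S ∪ I)).card ≤ (N S).card + (X.card + 1) :=
    (card_le_card hsub).trans ((card_union_le _ _).trans
      (Nat.add_le_add_left (card_insert_le v X) _))
  have hle : ((S ∪ I).card : ℤ) - ((N (S ∪ I)).card : ℤ) ≤ (S.card : ℤ) - ((N S).card : ℤ) :=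
    hMax (S ∪ I) hInd' hNonIso'
  have hle_card : (S ∪ I).card ≤ S.card :=
    hMaxCard (S ∪ I) hInd' hNonIso' (le_antisymm hle (by
      change (S.card : ℤ) - ((N S).card : ℤ) ≤ ((S ∪ I).card : ℤ) - ((N (S ∪ I)).card : ℤ)
      omega))
  omega
end

section
/- Let P be a finite simple graph and let S be an independent set of non-isolated vertices of P such that (i) |S| − |N(S)| ≥ |S'| − |N(S')| (as integers) for every independent set S' of non-isolated vertices of P, and (ii) |S| ≥ |S'| for every independent set S' of non-isolated vertices achieving |S'| − |N(S')| = |S| − |N(S)|. Let R = V(P) \ N[S] and assume that every vertex of R has at least one neighbor in R. Then: (1) there exists a partition of R into blocks, each of which is either a two-element set of adjacent vertices or a set of odd cardinality at least 3 on which the induced subgraph of P contains a Hamiltonian cycle; and (2) for every vertex x ∈ R, such a partition also exists for R \ {x}. -/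
open Finset

/-- A partition of the finset `R` into blocks, each of which is either a pair of adjacent
vertices or an odd-size block of size at least 3 whose induced subgraph has a Hamiltonian
cycle. This encodes a spanning subgraph of `P[R]` that is a disjoint union of edges and
odd cycles. -/
def EdgeOddCyclePartition {V : Type*} [Fintype V] [DecidableEq V]
    (P : SimpleGraph V) (R : Finset V) (Part : Finset (Finset V)) : Prop :=
  (∀ B ∈ Part, B ⊆ R) ∧
  (∀ v ∈ R, ∃! B, B ∈ Part ∧ v ∈ B) ∧
  (∀ B ∈ Part, (∃ a b, P.Adj a b ∧ B = {a, b}) ∨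
    (3 ≤ B.card ∧ Odd B.card ∧ (P.induce (B : Set V)).IsHamiltonian))

namespace EdgeOddCyclePartition

variable {V : Type*} [Fintype V] [DecidableEq V] {P : SimpleGraph V}

lemma empty : EdgeOddCyclePartition P ∅ ∅ := by
  simp [EdgeOddCyclePartition]

lemma singleton {B : Finset V} (hB : (∃ a b, P.Adj a b ∧ B = {a, b}) ∨
    (3 ≤ B.card ∧ Odd B.card ∧ (P.induce (B : Set V)).IsHamiltonian)) :
    EdgeOddCyclePartition P B {B} := by
  refine ⟨by simp, fun v hv ↦ ⟨B, by simp [hv], by simp⟩, by simpa using hB⟩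

lemma union {A B : Finset V} (hAB : Disjoint A B) {Q Q' : Finset (Finset V)}
    (hQ : EdgeOddCyclePartition P A Q) (hQ' : EdgeOddCyclePartition P B Q') :
    EdgeOddCyclePartition P (A ∪ B) (Q ∪ Q') := by
  obtain ⟨hsub, huniq, hblock⟩ := hQ
  obtain ⟨hsub', huniq', hblock'⟩ := hQ'
  rw [Finset.disjoint_left] at hAB
  refine ⟨?_, ?_, ?_⟩
  · intro C hC
    rcases Finset.mem_union.1 hC with hC | hC
    · exact (hsub C hC).trans Finset.subset_union_left
    · exact (hsub' C hC).trans Finset.subset_union_right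
  · intro v hv
    rcases Finset.mem_union.1 hv with hv | hv
    · obtain ⟨C, hC, hC'⟩ := huniq v hv
      refine ⟨C, ⟨Finset.mem_union_left _ hC.1, hC.2⟩, ?_⟩
      rintro D ⟨hD, hvD⟩
      rcases Finset.mem_union.1 hD with hD | hD
      · exact hC' D ⟨hD, hvD⟩
      · exact absurd (hsub' D hD hvD) (hAB hv)
    · obtain ⟨C, hC, hC'⟩ := huniq' v hv
      refine ⟨C, ⟨Finset.mem_union_right _ hC.1, hC.2⟩, ?_⟩
      rintro D ⟨hD, hvD⟩
      rcases Finset.mem_union.1 hD with hD | hD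
      · exact absurd hv (hAB (hsub D hD hvD))
      · exact hC' D ⟨hD, hvD⟩
  · intro C hC
    rcases Finset.mem_union.1 hC with hC | hC
    · exact hblock C hC
    · exact hblock' C hC

/-- The vertex set of a path with an even number of vertices is partitioned by alternate edges. -/
lemma exists_of_isChain_even : ∀ l : List V, l.Nodup → l.IsChain P.Adj → Even l.length →
    ∃ Q, EdgeOddCyclePartition P l.toFinset Q
  | [], _, _, _ => ⟨∅, empty⟩
  | [_], _, _, h => by simp at h
  | a :: b :: l, hnd, hch, heven => by
    have hnd' : l.Nodup := hnd.of_cons.of_cons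
    obtain ⟨Q, hQ⟩ := exists_of_isChain_even l hnd' hch.tail.tail
      (by simpa [Nat.even_add_one] using heven)
    have hab : P.Adj a b := (List.isChain_cons_cons.1 hch).1
    have hdisj : Disjoint {a, b} l.toFinset := by
      simp only [List.nodup_cons, List.mem_cons, not_or] at hnd
      simp [hnd.1.2, hnd.2.1]
    refine ⟨{{a, b}} ∪ Q, ?_⟩
    convert union hdisj (singleton (Or.inl ⟨a, b, hab, rfl⟩)) hQ using 1
    ext; simp

end EdgeOddCyclePartition

namespace SimpleGraph

variable {V : Type*} [DecidableEq V] {P : SimpleGraph V}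

lemma isHamiltonian_cycleGraph (n : ℕ) : (cycleGraph (n + 3)).IsHamiltonian := fun _ ↦
  ⟨0, cycleGraph.cycle n, Walk.isHamiltonianCycle_iff_isCycle_and_length_eq.2
    ⟨cycleGraph.isCycle_cycle, by simp [cycleGraph.length_cycle]⟩⟩

/-- A cyclic listing of at least three vertices, consecutive ones being adjacent, makes the
induced subgraph Hamiltonian. -/
lemma isHamiltonian_induce_toFinset {l : List V} (hnd : l.Nodup) (hl : 3 ≤ l.length)
    (hadj : ∀ (i : ℕ) (hi : i < l.length),
      P.Adj l[i] (l[(i + 1) % l.length]'(Nat.mod_lt _ (by omega)))) :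
    (P.induce ((l.toFinset : Finset V) : Set V)).IsHamiltonian := by
  obtain ⟨n, hn⟩ : ∃ n, l.length = n + 3 := ⟨l.length - 3, by omega⟩
  have hsucc : ∀ u v : Fin (n + 3), v - u = 1 →
      P.Adj (l[u.val]'(by omega)) (l[v.val]'(by omega)) := by
    intro u v huv
    have hv : v = u + 1 := by rw [← huv]; abel
    have key := hadj u (by omega)
    have hval : v.val = (u.val + 1) % l.length := by
      rw [hv, hn, Fin.val_add]; simp
    simpa only [hval] using key
  let f : cycleGraph (n + 3) →g P.induce ((l.toFinset : Finset V) : Set V) :=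
    { toFun := fun i ↦ ⟨l[i.val]'(by omega), by simp⟩
      map_rel' := by
        intro u v huv
        rw [cycleGraph_adj] at huv
        rcases huv with h | h
        · exact (hsucc v u h).symm
        · exact hsucc u v h }
  have hf : Function.Bijective f := by
    constructor
    · intro u v huv
      have := congrArg Subtype.val huv
      exact Fin.ext ((hnd.getElem_inj_iff).1 this)
    · rintro ⟨v, hv⟩
      obtain ⟨i, hi, rfl⟩ := List.getElem_of_mem (List.mem_toFinset.1 hv)
      exact ⟨⟨i, by omega⟩, rfl⟩
  intro _
  obtain ⟨a, p, hp⟩ := isHamiltonian_cycleGraph n (by simp)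
  exact ⟨f a, p.map f, hp.map hf⟩

end SimpleGraph

namespace EdgeOddCyclePartition

variable {V : Type*} [Fintype V] [DecidableEq V] {P : SimpleGraph V}

lemma exists_of_cyclic_list {l : List V} (hnd : l.Nodup) (hl : 2 ≤ l.length)
    (hadj : ∀ (i : ℕ) (hi : i < l.length),
      P.Adj l[i] (l[(i + 1) % l.length]'(Nat.mod_lt _ (by omega)))) :
    ∃ Q, EdgeOddCyclePartition P l.toFinset Q := by
  rcases Nat.even_or_odd l.length with heven | hodd
  · refine exists_of_isChain_even l hnd (List.isChain_iff_getElem.2 fun i hi ↦ ?_) heven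
    have := hadj i (by omega)
    simpa only [Nat.mod_eq_of_lt hi] using this
  · have hl3 : 3 ≤ l.length := by
      obtain ⟨k, hk⟩ := hodd
      omega
    have hcard := List.toFinset_card_of_nodup hnd
    exact ⟨_, singleton (Or.inr ⟨by omega, by rwa [hcard],
      SimpleGraph.isHamiltonian_induce_toFinset hnd hl3 hadj⟩)⟩

lemma exists_of_perm (σ : Equiv.Perm V) (R : Finset V)
    (hσ : ∀ v ∈ R, σ v ∈ R ∧ P.Adj v (σ v)) :
    ∃ Q, EdgeOddCyclePartition P R Q := by
  induction R using Finset.strongInduction with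
  | H R ih =>
    rcases R.eq_empty_or_nonempty with rfl | ⟨x, hx⟩
    · exact ⟨∅, empty⟩
    have hpow : ∀ k : ℕ, (σ ^ k) x ∈ R := by
      intro k
      induction k with
      | zero => simpa using hx
      | succ k hk =>
        rw [pow_succ', Equiv.Perm.mul_apply]
        exact (hσ _ hk).1
    have hsupp : x ∈ σ.support := Equiv.Perm.mem_support.2 (hσ x hx).2.ne'
    have hxl : x ∈ σ.toList x := Equiv.Perm.mem_toList_iff.2 ⟨.refl _ _, hsupp⟩
    have hsub : (σ.toList x).toFinset ⊆ R := by
      intro v hv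
      obtain ⟨i, hi, rfl⟩ := List.getElem_of_mem (List.mem_toFinset.1 hv)
      rw [Equiv.Perm.getElem_toList]
      exact hpow i
    have hlen : 2 ≤ (σ.toList x).length :=
      Equiv.Perm.two_le_length_toList_iff_mem_support.2 hsupp
    obtain ⟨Q, hQ⟩ := exists_of_cyclic_list (P := P) (σ.nodup_toList x) hlen (by
      intro i hi
      rw [Equiv.Perm.getElem_toList, Equiv.Perm.getElem_toList, Equiv.Perm.length_toList,
        Equiv.Perm.pow_mod_card_support_cycleOf_self_apply, pow_succ', Equiv.Perm.mul_apply]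
      exact (hσ _ (hpow i)).2)
    obtain ⟨Q', hQ'⟩ := ih (R \ (σ.toList x).toFinset)
      (Finset.sdiff_ssubset hsub ⟨x, List.mem_toFinset.2 hxl⟩) (by
        intro v hv
        simp only [Finset.mem_sdiff, List.mem_toFinset, Equiv.Perm.mem_toList_iff,
          Equiv.Perm.sameCycle_apply_right] at hv ⊢
        exact ⟨⟨(hσ v hv.1).1, hv.2⟩, (hσ v hv.1).2⟩)
    refine ⟨Q ∪ Q', ?_⟩
    have := union Finset.disjoint_sdiff hQ hQ'
    rwa [Finset.union_sdiff_of_subset hsub] at this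

variable [DecidableRel P.Adj]

/-- If `|T| ≤ |N(T) ∩ R|` for every independent `T ⊆ R`, then the same holds for every `T ⊆ R`. -/
lemma card_le_card_neighbors_of_indep {R : Finset V}
    (h : ∀ T ⊆ R, (∀ u ∈ T, ∀ v ∈ T, ¬ P.Adj u v) →
      T.card ≤ (T.biUnion (fun s ↦ P.neighborFinset s) ∩ R).card) (T : Finset V) (hT : T ⊆ R) :
    T.card ≤ (T.biUnion (fun s ↦ P.neighborFinset s) ∩ R).card := by
  set T₀ := T.filter (fun v ↦ ∀ u ∈ T, ¬ P.Adj u v) with hT₀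
  have hsub : T₀ ⊆ T := Finset.filter_subset _ _
  have h₀ := h T₀ (hsub.trans hT) fun u hu v hv ↦ (Finset.mem_filter.1 hv).2 u (hsub hu)
  have hdisj : Disjoint (T₀.biUnion (fun s ↦ P.neighborFinset s) ∩ R) (T \ T₀) := by
    rw [Finset.disjoint_left]
    intro v hv hv'
    simp only [Finset.mem_inter, Finset.mem_biUnion, SimpleGraph.mem_neighborFinset] at hv
    obtain ⟨⟨s, hs, hsv⟩, -⟩ := hv
    exact (Finset.mem_filter.1 hs).2 v (Finset.mem_sdiff.1 hv').1 hsv.symm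
  have hunion : (T₀.biUnion (fun s ↦ P.neighborFinset s) ∩ R) ∪ (T \ T₀) ⊆
      T.biUnion (fun s ↦ P.neighborFinset s) ∩ R := by
    refine Finset.union_subset
      (Finset.inter_subset_inter_right (Finset.biUnion_subset_biUnion_of_subset_left _ hsub)) ?_
    intro v hv
    have hvT := (Finset.mem_sdiff.1 hv).1
    have hv' : ∃ u ∈ T, P.Adj u v := by
      simpa [hT₀, hvT] using hv
    obtain ⟨u, hu, huv⟩ := hv'
    simp only [Finset.mem_inter, Finset.mem_biUnion, SimpleGraph.mem_neighborFinset]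
    exact ⟨⟨u, hu, huv⟩, hT hvT⟩
  have hcard := Finset.card_le_card hunion
  rw [Finset.card_union_of_disjoint hdisj, Finset.card_sdiff_of_subset hsub] at hcard
  have := Finset.card_le_card hsub
  omega

/-- Tutte's criterion: if `|T| ≤ |N(T) ∩ R|` for every independent `T ⊆ R`, then `P[R]` has a
spanning subgraph that is a disjoint union of edges and odd cycles. -/
lemma exists_of_indep_card_le {R : Finset V}
    (h : ∀ T ⊆ R, (∀ u ∈ T, ∀ v ∈ T, ¬ P.Adj u v) →
      T.card ≤ (T.biUnion (fun s ↦ P.neighborFinset s) ∩ R).card) :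
    ∃ Q, EdgeOddCyclePartition P R Q := by
  obtain ⟨f, hinj, hf⟩ := (Finset.all_card_le_biUnion_card_iff_exists_injective
    (fun v : R ↦ P.neighborFinset v ∩ R)).1 (by
      intro A
      have := card_le_card_neighbors_of_indep h (A.map (Function.Embedding.subtype _))
        (by intro v hv; simp at hv; exact hv.1)
      rw [Finset.card_map] at this
      convert this using 2
      ext v
      simp only [Finset.mem_biUnion, Finset.mem_inter, SimpleGraph.mem_neighborFinset,
        Finset.mem_map, Function.Embedding.subtype_apply]
      constructor
      · rintro ⟨a, ha, hav, hv⟩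
        exact ⟨⟨a, ⟨a, ha, rfl⟩, hav⟩, hv⟩
      · rintro ⟨⟨_, ⟨a, ha, rfl⟩, hav⟩, hv⟩
        exact ⟨a, ha, hav, hv⟩)
  have hfR : ∀ v, f v ∈ R := fun v ↦ (Finset.mem_inter.1 (hf v)).2
  have hbij : Function.Bijective (fun v : R ↦ (⟨f v, hfR v⟩ : R)) :=
    Finite.injective_iff_bijective.1 fun u v huv ↦ hinj (congrArg Subtype.val huv)
  refine exists_of_perm (Equiv.Perm.ofSubtype (p := (· ∈ R)) (Equiv.ofBijective _ hbij)) R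
    fun v hv ↦ ?_
  rw [Equiv.Perm.ofSubtype_apply_of_mem _ hv]
  exact ⟨hfR _, by simpa using (Finset.mem_inter.1 (hf ⟨v, hv⟩)).1⟩

end EdgeOddCyclePartition

/-- With `S` an independent set of non-isolated vertices maximizing
`|S| − |N(S)|`, of maximum cardinality among such maximizers, and
`R = V(P) \ N[S]` having no isolated vertices in `P[R]`: (1) `R` admits a partition into
adjacent pairs and odd blocks carrying Hamiltonian cycles, and (2) so does `R \ {x}`
for every `x ∈ R`. -/
theorem stmt7 {V : Type*} [Fintype V] [DecidableEq V]
    (P : SimpleGraph V) [DecidableRel P.Adj] (S : Finset V)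
    (hInd : ∀ u ∈ S, ∀ v ∈ S, ¬ P.Adj u v)
    (hNonIso : ∀ v ∈ S, ∃ w, P.Adj v w)
    (hMax : ∀ S' : Finset V, (∀ u ∈ S', ∀ v ∈ S', ¬ P.Adj u v) →
      (∀ v ∈ S', ∃ w, P.Adj v w) →
      (S'.card : ℤ) - ((S'.biUnion (fun s => P.neighborFinset s)).card : ℤ) ≤
        (S.card : ℤ) - ((S.biUnion (fun s => P.neighborFinset s)).card : ℤ))
    (hMaxCard : ∀ S' : Finset V, (∀ u ∈ S', ∀ v ∈ S', ¬ P.Adj u v) →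
      (∀ v ∈ S', ∃ w, P.Adj v w) →
      (S'.card : ℤ) - ((S'.biUnion (fun s => P.neighborFinset s)).card : ℤ) =
        (S.card : ℤ) - ((S.biUnion (fun s => P.neighborFinset s)).card : ℤ) →
      S'.card ≤ S.card)
    (R : Finset V)
    (hR : R = Finset.univ \ (S ∪ S.biUnion (fun s => P.neighborFinset s)))
    (hRnoIso : ∀ v ∈ R, ∃ w ∈ R, P.Adj v w) :
    (∃ Part : Finset (Finset V), EdgeOddCyclePartition P R Part) ∧
    (∀ x ∈ R, ∃ Part : Finset (Finset V), EdgeOddCyclePartition P (R \ {x}) Part) := by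
  have hT : ∀ T ⊆ R, T.Nonempty → (∀ u ∈ T, ∀ v ∈ T, ¬ P.Adj u v) →
      T.card < (T.biUnion (fun s ↦ P.neighborFinset s) ∩ R).card := by
    intro T hTR hne hTind
    have hTout : ∀ t ∈ T, t ∉ S ∧ ∀ s ∈ S, ¬ P.Adj s t := by
      intro t ht
      simpa [hR] using hTR ht
    have hdisj : Disjoint S T := Finset.disjoint_right.2 fun t ht ↦ (hTout t ht).1
    have hind : ∀ u ∈ S ∪ T, ∀ v ∈ S ∪ T, ¬ P.Adj u v := by
      intro u hu v hv huv
      rcases Finset.mem_union.1 hu with hu | hu <;> rcases Finset.mem_union.1 hv with hv | hv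
      · exact hInd u hu v hv huv
      · exact (hTout v hv).2 u hu huv
      · exact (hTout u hu).2 v hv huv.symm
      · exact hTind u hu v hv huv
    have hiso : ∀ v ∈ S ∪ T, ∃ w, P.Adj v w := by
      intro v hv
      rcases Finset.mem_union.1 hv with hv | hv
      · exact hNonIso v hv
      · obtain ⟨w, -, hw⟩ := hRnoIso v (hTR hv)
        exact ⟨w, hw⟩
    have hN : (S ∪ T).biUnion (fun s ↦ P.neighborFinset s) =
        S.biUnion (fun s ↦ P.neighborFinset s) ∪
          (T.biUnion (fun s ↦ P.neighborFinset s) ∩ R) := by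
      ext v
      have hvS : v ∈ S → ∀ t ∈ T, ¬ P.Adj t v := fun hv t ht htv ↦ (hTout t ht).2 v hv htv.symm
      simp only [hR, Finset.mem_biUnion, Finset.mem_union, Finset.mem_inter, Finset.mem_sdiff,
        Finset.mem_univ, SimpleGraph.mem_neighborFinset, true_and]
      grind
    have hNdisj : Disjoint (S.biUnion (fun s ↦ P.neighborFinset s))
        (T.biUnion (fun s ↦ P.neighborFinset s) ∩ R) := by
      rw [Finset.disjoint_left]
      intro v hv hv'
      have := (Finset.mem_inter.1 hv').2
      rw [hR] at this
      exact (Finset.mem_sdiff.1 this).2 (Finset.mem_union_right _ hv)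
    have hle := hMax _ hind hiso
    have heq := hMaxCard _ hind hiso
    rw [hN, Finset.card_union_of_disjoint hNdisj, Finset.card_union_of_disjoint hdisj] at hle heq
    have hpos := hne.card_pos
    push_cast at hle heq
    by_contra hlt
    have := heq (by omega)
    omega
  refine ⟨EdgeOddCyclePartition.exists_of_indep_card_le fun T hTR hTind ↦ ?_, fun x _ ↦
    EdgeOddCyclePartition.exists_of_indep_card_le fun T hTR hTind ↦ ?_⟩
  · rcases T.eq_empty_or_nonempty with rfl | hne
    · simp
    · exact (hT T hTR hne hTind).le
  · rcases T.eq_empty_or_nonempty with rfl | hne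
    · simp
    · have hlt := hT T (hTR.trans Finset.sdiff_subset) hne hTind
      rw [← Finset.inter_sdiff_assoc, Finset.sdiff_singleton_eq_erase]
      have := Finset.pred_card_le_card_erase (a := x)
        (s := T.biUnion (fun s ↦ P.neighborFinset s) ∩ R)
      omega
end

section
/- Let P be a finite simple graph and let S be an independent set of non-isolated vertices of P such that |S| − |N(S)| ≥ |S'| − |N(S')| (as integers) for every independent set S' of non-isolated vertices of P. Then every non-isolated vertex of P lying in R = V(P) \ N[S] has at least one neighbor in R; in other words, a vertex of R that has no neighbor in R must be isolated in P. -/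
open Finset

/-- With `S` an independent set of non-isolated vertices maximizing
`|S| − |N(S)|`, every non-isolated vertex of `P` lying in `R = V(P) \ N[S]` has a
neighbor in `R`. -/
theorem stmt8 {V : Type*} [Fintype V] [DecidableEq V]
    (P : SimpleGraph V) [DecidableRel P.Adj] (S : Finset V)
    (hInd : ∀ u ∈ S, ∀ v ∈ S, ¬ P.Adj u v)
    (hNonIso : ∀ v ∈ S, ∃ w, P.Adj v w)
    (hMax : ∀ S' : Finset V, (∀ u ∈ S', ∀ v ∈ S', ¬ P.Adj u v) →
      (∀ v ∈ S', ∃ w, P.Adj v w) →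
      (S'.card : ℤ) - ((S'.biUnion (fun s => P.neighborFinset s)).card : ℤ) ≤
        (S.card : ℤ) - ((S.biUnion (fun s => P.neighborFinset s)).card : ℤ))
    (R : Finset V)
    (hR : R = Finset.univ \ (S ∪ S.biUnion (fun s => P.neighborFinset s))) :
    ∀ v ∈ R, (∃ w, P.Adj v w) → ∃ w ∈ R, P.Adj v w := by
  intro v hv hvw
  subst hR
  simp only [mem_sdiff, mem_univ, true_and, mem_union, mem_biUnion, SimpleGraph.mem_neighborFinset,
    not_or, not_exists, not_and] at hv ⊢
  obtain ⟨hvS, hvN⟩ := hv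
  by_contra! hcon
  -- All neighbors of `v` lie in `N(S)`, so adding `v` to `S` does not enlarge `N(S)`.
  have hN : P.neighborFinset v ⊆ S.biUnion (fun s => P.neighborFinset s) := by
    intro w hw
    rw [SimpleGraph.mem_neighborFinset] at hw
    by_contra hwN
    simp only [mem_biUnion, SimpleGraph.mem_neighborFinset, not_exists, not_and] at hwN
    exact hcon w ⟨fun hwS => hvN w hwS hw.symm, hwN⟩ hw
  have hle := hMax (insert v S)
    (by
      simp only [mem_insert, forall_eq_or_imp]
      exact ⟨⟨P.irrefl, fun s hs h => hvN s hs h.symm⟩, fun s hs => ⟨hvN s hs, hInd s hs⟩⟩)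
    (by
      simp only [mem_insert, forall_eq_or_imp]
      exact ⟨hvw, hNonIso⟩)
  rw [biUnion_insert, union_eq_right.mpr hN, card_insert_of_notMem hvS] at hle
  push_cast at hle
  linarith
end
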